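/- Let α : ℝ^n → ℝ be locally log-Hölder continuous with constant c_log(α), and let R ≥ c_log(α). Then there exists a constant c > 0 such that for every measurable function f : ℝ^n → ℂ, every v, h ∈ ℕ₀ and every x ∈ ℝ^n, one has 2^{vα(x)} (η_{v,h+R} ∗ |f|)(x) ≤ c (η_{v,h} ∗ (2^{vα(·)}|f|))(x), i.e. the variable smoothness factor 2^{vα(·)} can be moved inside the convolution at the cost of increasing the decay parameter by R. -/

import Mathlib

open MeasureTheory ENNReal Real Set

noncomputable section

/-- Euclidean space ℝ^n. -/
abbrev En (n : ℕ) := EuclideanSpace ℝ (Fin n)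

/-- `g` is locally log-Hölder continuous with constant `c`. -/
def LocLogHolder {n : ℕ} (c : ℝ) (g : En n → ℝ) : Prop :=
  0 < c ∧ ∀ x y : En n, |g x - g y| ≤ c / Real.log (Real.exp 1 + 1 / ‖x - y‖)

/-- `g` is globally log-Hölder continuous with local constant `c`. -/
def GlobLogHolder {n : ℕ} (c : ℝ) (g : En n → ℝ) : Prop :=
  LocLogHolder c g ∧
    ∃ (gi cd : ℝ), 0 < cd ∧ ∀ x : En n, |g x - gi| ≤ cd / Real.log (Real.exp 1 + ‖x‖)

/-- The kernel η_{v,h}(x) = 2^{nv} (1 + 2^v |x|)^{-h}. -/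
def eta (n : ℕ) (v : ℕ) (h : ℝ) (x : En n) : ℝ :=
  (2 : ℝ) ^ (n * v) * (1 + (2 : ℝ) ^ v * ‖x‖) ^ (-h)

/-- The dyadic cube Q_{v,m}. -/
def dyadicCube (n : ℕ) (v : ℤ) (m : Fin n → ℤ) : Set (En n) :=
  {x | ∀ i, (m i : ℝ) ≤ (2 : ℝ) ^ v * x i ∧ (2 : ℝ) ^ v * x i < m i + 1}

/-- Luxemburg (quasi-)norm of an ℝ≥0∞-valued function with variable exponent `p`. -/
def luxNorm {n : ℕ} (p : En n → ℝ) (F : En n → ℝ≥0∞) : ℝ≥0∞ :=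
  sInf {c : ℝ≥0∞ | 0 < c ∧ ∫⁻ x, (F x / c) ^ p x ≤ 1}

/-- The mixed Lebesgue-sequence space norm ‖(F_v)_v‖_{L^{p(·)}(ℓ_{q(·)})}. -/
def mixedNorm {n : ℕ} (p q : En n → ℝ) (F : ℕ → En n → ℝ≥0∞) : ℝ≥0∞ :=
  luxNorm p fun x => (∑' v : ℕ, F v x ^ q x) ^ (1 / q x)

/-- The sequence space norm ‖λ‖_{f^{α(·)}_{p(·),q(·)}}. -/
def seqNorm {n : ℕ} (α p q : En n → ℝ) (lam : ℕ → (Fin n → ℤ) → ℂ) : ℝ≥0∞ :=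
  mixedNorm p q fun v x =>
    ∑' m : Fin n → ℤ,
      ENNReal.ofReal ((2 : ℝ) ^ ((v : ℝ) * (α x + n / 2)) * ‖lam v m‖) *
        (dyadicCube n (v : ℤ) m).indicator (fun _ => (1 : ℝ≥0∞)) x

/-- The sequence space norm ‖λ‖_{f^{α(·)}_{∞,q}}. -/
def seqNormInf {n : ℕ} (α : En n → ℝ) (q : ℝ) (lam : ℕ → (Fin n → ℤ) → ℂ) : ℝ≥0∞ :=
  ⨆ (vQ : ℤ) (mQ : Fin n → ℤ),
    volume (dyadicCube n vQ mQ) ^ (-(1 / q)) *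
      (∑' v : ℕ, if vQ ≤ (v : ℤ) then
          ∫⁻ x in dyadicCube n vQ mQ,
            ∑' m : Fin n → ℤ,
              ENNReal.ofReal ((2 : ℝ) ^ ((v : ℝ) * (α x + n / 2) * q) * ‖lam v m‖ ^ q) *
                (dyadicCube n (v : ℤ) m).indicator (fun _ => (1 : ℝ≥0∞)) x
        else 0) ^ (1 / q)

/-- The Calderón product (quasi-)norm associated to two sequence space norms. -/
def calderonNorm {n : ℕ} (N0 N1 : (ℕ → (Fin n → ℤ) → ℂ) → ℝ≥0∞) (θ : ℝ)
    (lam : ℕ → (Fin n → ℤ) → ℂ) : ℝ≥0∞ :=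
  sInf {M : ℝ≥0∞ | ∃ μ ν : ℕ → (Fin n → ℤ) → ℂ, N0 μ ≤ 1 ∧ N1 ν ≤ 1 ∧
    ∀ v m, ENNReal.ofReal ‖lam v m‖ ≤
      M * ENNReal.ofReal ‖μ v m‖ ^ (1 - θ) * ENNReal.ofReal ‖ν v m‖ ^ θ}

/-!
The constant is `c = exp c_log(α)`, and the inequality already holds between the integrands. With
`a = 2 ^ v` and `t = |x - y|`, the factorisation `a = (a t) (1 / t) ≤ (1 + a t) (e + 1 / t)` shows
that `log a / log (e + 1 / t) ≤ 1 + log (1 + a t)`. Log-Hölder continuity therefore bounds the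
oscillation `a ^ (α x - α y)` by `exp c_log(α) * (1 + a |x - y|) ^ c_log(α)`, which is absorbed by
the extra decay of the kernel.
-/

theorem one_le_log_exp_one_add {s : ℝ} (hs : 0 ≤ s) : 1 ≤ Real.log (Real.exp 1 + s) :=
  (Real.le_log_iff_exp_le (by positivity)).mpr (le_add_of_nonneg_right hs)

theorem log_le_log_one_add_mul_add_log_exp_one_add {a t : ℝ} (ha : 0 < a) (ht : 0 < t) :
    Real.log a ≤ Real.log (1 + a * t) + Real.log (Real.exp 1 + 1 / t) := by
  rw [← Real.log_mul (by positivity) (by positivity)]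
  refine Real.log_le_log ha ?_
  calc a = a * t * (1 / t) := by field_simp
    _ ≤ (1 + a * t) * (Real.exp 1 + 1 / t) := by
      gcongr
      · exact le_add_of_nonneg_left zero_le_one
      · exact le_add_of_nonneg_left (Real.exp_pos 1).le

theorem log_div_log_exp_one_add_le {a t : ℝ} (ha : 0 < a) (ht : 0 < t) :
    Real.log a / Real.log (Real.exp 1 + 1 / t) ≤ 1 + Real.log (1 + a * t) := by
  have hL : 1 ≤ Real.log (Real.exp 1 + 1 / t) := one_le_log_exp_one_add (by positivity)
  have hA : 0 ≤ Real.log (1 + a * t) :=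
    Real.log_nonneg (le_add_of_nonneg_right (by positivity))
  rw [div_le_iff₀ (zero_lt_one.trans_le hL)]
  calc Real.log a
      ≤ Real.log (1 + a * t) + Real.log (Real.exp 1 + 1 / t) :=
        log_le_log_one_add_mul_add_log_exp_one_add ha ht
    _ ≤ Real.log (1 + a * t) * Real.log (Real.exp 1 + 1 / t) +
          Real.log (Real.exp 1 + 1 / t) := by
        gcongr
        exact le_mul_of_one_le_right hA hL
    _ = (1 + Real.log (1 + a * t)) * Real.log (Real.exp 1 + 1 / t) := by ring

namespace LocLogHolder

variable {n : ℕ} {c : ℝ} {g : En n → ℝ} {a : ℝ}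

theorem log_mul_sub_le (hg : LocLogHolder c g) (ha : 1 ≤ a) (x y : En n) :
    Real.log a * (g x - g y) ≤ c * (1 + Real.log (1 + a * ‖x - y‖)) := by
  obtain ⟨hc, hosc⟩ := hg
  rcases eq_or_ne x y with rfl | hxy
  · simp [hc.le]
  · have hdist : 0 < ‖x - y‖ := norm_sub_pos_iff.mpr hxy
    calc Real.log a * (g x - g y)
        ≤ Real.log a * (c / Real.log (Real.exp 1 + 1 / ‖x - y‖)) :=
          mul_le_mul_of_nonneg_left ((le_abs_self _).trans (hosc x y)) (Real.log_nonneg ha)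
      _ = c * (Real.log a / Real.log (Real.exp 1 + 1 / ‖x - y‖)) := by ring
      _ ≤ c * (1 + Real.log (1 + a * ‖x - y‖)) := by
          gcongr
          exact log_div_log_exp_one_add_le (zero_lt_one.trans_le ha) hdist

theorem rpow_le (hg : LocLogHolder c g) (ha : 1 ≤ a) (x y : En n) :
    a ^ g x ≤ Real.exp c * (1 + a * ‖x - y‖) ^ c * a ^ g y := by
  have ha₀ : 0 < a := zero_lt_one.trans_le ha
  rw [Real.rpow_def_of_pos ha₀, Real.rpow_def_of_pos ha₀,
    Real.rpow_def_of_pos (by positivity), ← Real.exp_add, ← Real.exp_add]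
  refine Real.exp_le_exp.mpr ?_
  linarith [hg.log_mul_sub_le ha x y]

end LocLogHolder

section Eta

variable {n : ℕ} (v : ℕ)

theorem eta_nonneg (h : ℝ) (x : En n) : 0 ≤ eta n v h x := by
  unfold eta
  positivity

theorem eta_antitone (x : En n) : Antitone fun h => eta n v h x := by
  intro h₁ h₂ hle
  have hbase : 1 ≤ 1 + (2 : ℝ) ^ v * ‖x‖ := le_add_of_nonneg_right (by positivity)
  exact mul_le_mul_of_nonneg_left
    (Real.rpow_le_rpow_of_exponent_le hbase (neg_le_neg hle)) (by positivity)

theorem rpow_mul_eta_add (h s : ℝ) (x : En n) :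
    (1 + (2 : ℝ) ^ v * ‖x‖) ^ s * eta n v (h + s) x = eta n v h x := by
  have hbase : 0 < 1 + (2 : ℝ) ^ v * ‖x‖ := by positivity
  rw [eta, eta, mul_left_comm, ← Real.rpow_add hbase]
  congr 2
  ring

end Eta

theorem LocLogHolder.two_rpow_mul_eta_le {n : ℕ} {c R : ℝ} {g : En n → ℝ}
    (hg : LocLogHolder c g) (hR : c ≤ R) (v : ℕ) (h : ℝ) (x y : En n) :
    (2 : ℝ) ^ ((v : ℝ) * g x) * eta n v (h + R) (x - y) ≤
      Real.exp c * (eta n v h (x - y) * (2 : ℝ) ^ ((v : ℝ) * g y)) := by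
  have hg_le := hg.rpow_le (one_le_pow₀ (one_le_two (α := ℝ)) : 1 ≤ (2 : ℝ) ^ v) x y
  rw [Real.rpow_natCast_mul zero_le_two, Real.rpow_natCast_mul zero_le_two]
  calc ((2 : ℝ) ^ v) ^ g x * eta n v (h + R) (x - y)
      ≤ (Real.exp c * (1 + (2 : ℝ) ^ v * ‖x - y‖) ^ c * ((2 : ℝ) ^ v) ^ g y) *
          eta n v (h + c) (x - y) :=
        mul_le_mul hg_le (eta_antitone v _ (add_le_add_right hR h)) (eta_nonneg v _ _)
          (by positivity)
    _ = Real.exp c * ((1 + (2 : ℝ) ^ v * ‖x - y‖) ^ c * eta n v (h + c) (x - y) *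
          ((2 : ℝ) ^ v) ^ g y) := by ring
    _ = Real.exp c * (eta n v h (x - y) * ((2 : ℝ) ^ v) ^ g y) := by
        rw [rpow_mul_eta_add]

theorem stmt1_general {n : ℕ} {E : Type*} [SeminormedAddCommGroup E] (μ : Measure (En n))
    {α : En n → ℝ} {cα R : ℝ} (hα : LocLogHolder cα α) (hR : cα ≤ R)
    (f : En n → E) (v : ℕ) (h : ℝ) (x : En n) :
    ENNReal.ofReal ((2 : ℝ) ^ ((v : ℝ) * α x)) *
        ∫⁻ y, ENNReal.ofReal (eta n v (h + R) (x - y) * ‖f y‖) ∂μ ≤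
      ENNReal.ofReal (Real.exp cα) *
        ∫⁻ y, ENNReal.ofReal
          (eta n v h (x - y) * ((2 : ℝ) ^ ((v : ℝ) * α y) * ‖f y‖)) ∂μ := by
  rw [← lintegral_const_mul' _ _ ENNReal.ofReal_ne_top,
    ← lintegral_const_mul' _ _ ENNReal.ofReal_ne_top]
  refine lintegral_mono fun y => ?_
  rw [← ENNReal.ofReal_mul (by positivity), ← ENNReal.ofReal_mul (by positivity)]
  refine ENNReal.ofReal_le_ofReal ?_
  simpa only [mul_assoc] using
    mul_le_mul_of_nonneg_right (hα.two_rpow_mul_eta_le hR v h x y) (norm_nonneg (f y))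

/-- the variable smoothness factor `2^{vα(·)}` can be moved inside the
convolution at the cost of increasing the decay parameter by `R ≥ c_log(α)`. -/
theorem stmt1 {n : ℕ} (α : En n → ℝ) (cα : ℝ) (hα : LocLogHolder cα α)
    (R : ℝ) (hR : cα ≤ R) :
    ∃ c : ℝ, 0 < c ∧ ∀ f : En n → ℂ, Measurable f → ∀ (v h : ℕ) (x : En n),
      ENNReal.ofReal ((2 : ℝ) ^ ((v : ℝ) * α x)) *
          ∫⁻ y, ENNReal.ofReal (eta n v ((h : ℝ) + R) (x - y) * ‖f y‖) ≤
        ENNReal.ofReal c *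
          ∫⁻ y, ENNReal.ofReal (eta n v (h : ℝ) (x - y) * ((2 : ℝ) ^ ((v : ℝ) * α y) * ‖f y‖)) := by
  exact ⟨Real.exp cα, Real.exp_pos cα, fun f _ v h x => stmt1_general volume hα hR f v h x⟩
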